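/- arXiv:1710.06517 — 7 statements merged into one kernel-verified Lean document; each statement's English description precedes it below -/
import Mathlib

section
/- For all natural numbers 0 ≤ k ≤ n, there exists a polynomial P ∈ ℤ[s,t] with nonnegative integer coefficients such that P · {k}!_{s,t} · {n−k}!_{s,t} = {n}!_{s,t} in ℤ[s,t]; in particular {k}!_{s,t}·{n−k}!_{s,t} divides {n}!_{s,t}, so the Fibonomial coefficient {n choose k}_{s,t} is a polynomial with nonnegative integer coefficients. -/
open MvPolynomial

/-- The generalized Fibonacci polynomials `{m}_{s,t} ∈ ℤ[s,t]`, with `s = X 0`, `t = X 1`. -/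
noncomputable def gfib : ℕ → MvPolynomial (Fin 2) ℤ
  | 0 => 0
  | 1 => 1
  | (m + 2) => X 0 * gfib (m + 1) + X 1 * gfib m

/-- The Fibonacci factorial `{m}!_{s,t} = {m}_{s,t} {m-1}_{s,t} ⋯ {1}_{s,t}`. -/
noncomputable def gfibFact : ℕ → MvPolynomial (Fin 2) ℤ
  | 0 => 1
  | (m + 1) => gfib (m + 1) * gfibFact m

theorem gfib_nn_add {P Q : MvPolynomial (Fin 2) ℤ} (hP : ∀ d : Fin 2 →₀ ℕ, 0 ≤ P.coeff d)
    (hQ : ∀ d : Fin 2 →₀ ℕ, 0 ≤ Q.coeff d) : ∀ d : Fin 2 →₀ ℕ, 0 ≤ (P + Q).coeff d := by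
  intro d
  rw [coeff_add]
  exact add_nonneg (hP d) (hQ d)

theorem gfib_nn_mul {P Q : MvPolynomial (Fin 2) ℤ} (hP : ∀ d : Fin 2 →₀ ℕ, 0 ≤ P.coeff d)
    (hQ : ∀ d : Fin 2 →₀ ℕ, 0 ≤ Q.coeff d) : ∀ d : Fin 2 →₀ ℕ, 0 ≤ (P * Q).coeff d := by
  intro d
  rw [coeff_mul]
  exact Finset.sum_nonneg fun x _ => mul_nonneg (hP _) (hQ _)

theorem gfib_nn_X (i : Fin 2) (d : Fin 2 →₀ ℕ) :
    0 ≤ (X i : MvPolynomial (Fin 2) ℤ).coeff d := by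
  classical
  rw [coeff_X']
  split_ifs <;> simp

theorem gfib_nn_one (d : Fin 2 →₀ ℕ) : 0 ≤ (1 : MvPolynomial (Fin 2) ℤ).coeff d := by
  classical
  rw [coeff_one]
  split_ifs <;> simp

theorem gfib_nn : ∀ (m : ℕ) (d : Fin 2 →₀ ℕ), 0 ≤ (gfib m).coeff d
  | 0 => by intro d; simp [gfib]
  | 1 => by intro d; rw [gfib]; exact gfib_nn_one d
  | (m + 2) => by
    rw [gfib]
    exact gfib_nn_add (gfib_nn_mul (gfib_nn_X 0) (gfib_nn (m + 1)))
      (gfib_nn_mul (gfib_nn_X 1) (gfib_nn m))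

theorem gfib_add_formula (b : ℕ) : ∀ a : ℕ,
    gfib (a + b + 1) = gfib (a + 1) * gfib (b + 1) + X 1 * gfib a * gfib b := by
  induction b with
  | zero => intro a; simp [gfib]
  | succ b ih =>
    intro a
    have h := ih (a + 1)
    rw [show a + (b + 1) + 1 = a + 1 + b + 1 by ring, h]
    simp only [gfib]
    ring

theorem gfib_main (N : ℕ) : ∀ a b : ℕ, a + b = N → ∃ P : MvPolynomial (Fin 2) ℤ,
    (∀ d : Fin 2 →₀ ℕ, 0 ≤ P.coeff d) ∧ P * gfibFact a * gfibFact b = gfibFact N := by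
  induction N with
  | zero =>
    intro a b h
    obtain ⟨rfl, rfl⟩ : a = 0 ∧ b = 0 := by omega
    exact ⟨1, gfib_nn_one, by simp [gfibFact]⟩
  | succ N ih =>
    intro a b h
    rcases a with _ | a
    · obtain rfl : b = N + 1 := by omega
      exact ⟨1, gfib_nn_one, by simp [gfibFact]⟩
    rcases b with _ | b
    · obtain rfl : a = N := by omega
      exact ⟨1, gfib_nn_one, by simp [gfibFact]⟩
    obtain ⟨P, hP, eP⟩ := ih (a + 1) b (by omega)
    obtain ⟨Q, hQ, eQ⟩ := ih a (b + 1) (by omega)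
    refine ⟨gfib (a + 2) * P + X 1 * gfib b * Q,
      gfib_nn_add (gfib_nn_mul (gfib_nn _) hP)
        (gfib_nn_mul (gfib_nn_mul (gfib_nn_X 1) (gfib_nn _)) hQ), ?_⟩
    have hf := gfib_add_formula b (a + 1)
    rw [show a + 1 + b + 1 = N + 1 by omega] at hf
    have e1 : gfibFact (a + 1) = gfib (a + 1) * gfibFact a := rfl
    have e2 : gfibFact (b + 1) = gfib (b + 1) * gfibFact b := rfl
    have e3 : gfibFact (N + 1) = gfib (N + 1) * gfibFact N := rfl
    rw [e1] at eP
    rw [e2] at eQ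
    rw [e3, hf, e1, e2]
    linear_combination (gfib (a + 2) * gfib (b + 1)) * eP + (X 1 * gfib (a + 1) * gfib b) * eQ

/-- For `0 ≤ k ≤ n` there is a polynomial `P ∈ ℤ[s,t]` with nonnegative coefficients
such that `P · {k}!_{s,t} · {n-k}!_{s,t} = {n}!_{s,t}`; i.e. the Fibonomial coefficient
is a polynomial with nonnegative integer coefficients. -/
theorem fibonomial_is_polynomial_with_nonneg_coeffs (n k : ℕ) (hk : k ≤ n) :
    ∃ P : MvPolynomial (Fin 2) ℤ,
      (∀ d : Fin 2 →₀ ℕ, 0 ≤ P.coeff d) ∧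
      P * gfibFact k * gfibFact (n - k) = gfibFact n := by
  exact gfib_main n k (n - k) (by omega)
end

section
/- Let 0 ≤ k ≤ n and let P ∈ ℤ[s,t] be the Fibonomial polynomial, i.e. the unique polynomial with P·{k}!_{s,t}·{n−k}!_{s,t} = {n}!_{s,t}. Then in the field of rational functions ℚ(a,b), P(a+b, −ab) = b^{k(n−k)} · Q(a/b), where Q ∈ ℤ[q] is the Gaussian binomial polynomial, i.e. the unique polynomial with Q·[k]!_q·[n−k]!_q = [n]!_q. -/
open MvPolynomial

/-- The q-analogue `[m]_q = 1 + q + ⋯ + q^{m-1} ∈ ℤ[q]`. -/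
noncomputable def qInt (m : ℕ) : Polynomial ℤ := ∑ i ∈ Finset.range m, Polynomial.X ^ i

/-- The q-factorial `[m]!_q = [m]_q [m-1]_q ⋯ [1]_q`. -/
noncomputable def qFact : ℕ → Polynomial ℤ
  | 0 => 1
  | (m + 1) => qInt (m + 1) * qFact m

/-- The field of rational functions `ℚ(a,b)`. -/
abbrev RatFunField := FractionRing (MvPolynomial (Fin 2) ℚ)

/-- The rational function `a ∈ ℚ(a,b)`. -/
noncomputable def ra : RatFunField :=
  algebraMap (MvPolynomial (Fin 2) ℚ) RatFunField (X 0)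

/-- The rational function `b ∈ ℚ(a,b)`. -/
noncomputable def rb : RatFunField :=
  algebraMap (MvPolynomial (Fin 2) ℚ) RatFunField (X 1)

theorem rb_ne : rb ≠ 0 := by
  unfold rb
  rw [Ne, FaithfulSMul.algebraMap_eq_zero_iff]
  exact X_ne_zero 1

theorem qInt_succ' (m : ℕ) (x : RatFunField) :
    Polynomial.aeval x (qInt (m + 1)) = Polynomial.aeval x (qInt m) + x ^ m := by
  simp [qInt, Finset.sum_range_succ]

theorem gfib_aeval (m : ℕ) :
    rb * aeval ![ra + rb, -(ra * rb)] (gfib m)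
      = rb ^ m * Polynomial.aeval (ra / rb) (qInt m) := by
  have hb := rb_ne
  have ha : ra = ra / rb * rb := by field_simp
  induction m using Nat.twoStepInduction with
  | zero => simp [gfib, qInt]
  | one => simp [gfib, qInt]
  | more m h1 h2 =>
    rw [gfib]
    rw [qInt_succ'] at h2
    rw [qInt_succ', qInt_succ']
    simp only [map_add, map_mul, aeval_X, Matrix.cons_val_zero, Matrix.cons_val_one]
    generalize ra / rb = x at *
    rw [ha]
    rw [ha] at h1 h2
    linear_combination (x * rb + rb) * h2 - x * rb * rb * h1

theorem gfib_aeval_succ (m : ℕ) :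
    aeval ![ra + rb, -(ra * rb)] (gfib (m + 1))
      = rb ^ m * Polynomial.aeval (ra / rb) (qInt (m + 1)) := by
  apply mul_left_cancel₀ rb_ne
  rw [gfib_aeval]
  ring

theorem gfibFact_aeval (m : ℕ) :
    aeval ![ra + rb, -(ra * rb)] (gfibFact m)
      = rb ^ (m.choose 2) * Polynomial.aeval (ra / rb) (qFact m) := by
  induction m with
  | zero => simp [gfibFact, qFact]
  | succ m ih =>
    rw [gfibFact, qFact, map_mul, map_mul, ih, gfib_aeval_succ,
      Nat.choose_succ_succ' m 1, Nat.choose_one_right, pow_add]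
    ring

theorem qInt_ne (m : ℕ) : Polynomial.aeval (ra / rb) (qInt (m + 1)) ≠ 0 := by
  intro h
  have h1 : Polynomial.aeval (ra / rb) (qInt (m + 1)) * (ra / rb - 1)
      = (ra / rb) ^ (m + 1) - 1 := by
    simp only [qInt, map_sum, map_pow, Polynomial.aeval_X]
    exact geom_sum_mul _ _
  rw [h, zero_mul, div_pow] at h1
  have h2 : ra ^ (m + 1) = rb ^ (m + 1) := by
    have := pow_ne_zero (m + 1) rb_ne
    field_simp at h1
    linear_combination -h1
  unfold ra rb at h2
  rw [← map_pow, ← map_pow] at h2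
  have h3 := FaithfulSMul.algebraMap_injective _ _ h2
  have h4 := congrArg (eval ![(0 : ℚ), 1]) h3
  simp at h4

theorem qFact_ne (m : ℕ) : Polynomial.aeval (ra / rb) (qFact m) ≠ 0 := by
  induction m with
  | zero => simp [qFact]
  | succ m ih =>
    rw [qFact, map_mul]
    exact mul_ne_zero (qInt_ne m) ih

theorem choose_two_add (k j : ℕ) :
    (k + j).choose 2 = k * j + k.choose 2 + j.choose 2 := by
  induction j with
  | zero => simp
  | succ j ih =>
    rw [← add_assoc, Nat.choose_succ_succ' (k + j) 1, Nat.choose_succ_succ' j 1, ih]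
    simp only [Nat.choose_one_right]
    ring

/-- If `P` is the Fibonomial polynomial for `(n, k)` and `Q` is the Gaussian binomial
polynomial, then in `ℚ(a,b)` we have `P(a + b, -ab) = b^{k(n-k)} Q(a/b)`. -/
theorem fibonomial_eq_qbinomial_of_substitution (n k : ℕ) (hk : k ≤ n)
    (P : MvPolynomial (Fin 2) ℤ)
    (hP : P * gfibFact k * gfibFact (n - k) = gfibFact n)
    (Q : Polynomial ℤ)
    (hQ : Q * qFact k * qFact (n - k) = qFact n) :
    aeval ![ra + rb, -(ra * rb)] P = rb ^ (k * (n - k)) * Polynomial.aeval (ra / rb) Q := by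
  obtain ⟨j, rfl⟩ := Nat.exists_eq_add_of_le hk
  rw [Nat.add_sub_cancel_left] at *
  have h1 := congrArg (aeval ![ra + rb, -(ra * rb)]) hP
  have h2 := congrArg (Polynomial.aeval (ra / rb)) hQ
  simp only [map_mul, gfibFact_aeval] at h1 h2
  rw [← h2, choose_two_add, pow_add, pow_add] at h1
  have hb := rb_ne
  have hne : rb ^ k.choose 2 * Polynomial.aeval (ra / rb) (qFact k)
      * (rb ^ j.choose 2 * Polynomial.aeval (ra / rb) (qFact j)) ≠ 0 :=
    mul_ne_zero (mul_ne_zero (pow_ne_zero _ hb) (qFact_ne k))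
      (mul_ne_zero (pow_ne_zero _ hb) (qFact_ne j))
  apply mul_right_cancel₀ hne
  linear_combination h1
end

section
/- Let k be a field and let φ : k[s,t] → k[a,b] be the k-algebra homomorphism determined by φ(s) = a+b and φ(t) = −ab. If p, q ∈ k[s,t] with q ≠ 0 and φ(q) divides φ(p) in k[a,b], then q divides p in k[s,t]. (Equivalently: a rational function f ∈ k(s,t) such that f(a+b, −ab) is a polynomial in a and b must itself be a polynomial in s and t.) -/
open MvPolynomial

/-- Let `φ : k[s,t] → k[a,b]` be the `k`-algebra map with `φ(s) = a + b`, `φ(t) = -ab`.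
If `q ≠ 0` and `φ(q) ∣ φ(p)` in `k[a,b]`, then `q ∣ p` in `k[s,t]`.  (Equivalently, a
rational function `f ∈ k(s,t)` such that `f(a+b, -ab)` is a polynomial is itself a
polynomial.) -/
theorem dvd_of_dvd_subst {K : Type*} [Field K] (p q : MvPolynomial (Fin 2) K)
    (hq : q ≠ 0)
    (h : (aeval ![(X 0 + X 1 : MvPolynomial (Fin 2) K), -(X 0 * X 1)] q) ∣
          (aeval ![(X 0 + X 1 : MvPolynomial (Fin 2) K), -(X 0 * X 1)] p)) :
    q ∣ p := by
  have e1 : esymm (Fin 2) K 1 = X 0 + X 1 := by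
    rw [esymm_one, Fin.sum_univ_two]
  have e2 : esymm (Fin 2) K 2 = X 0 * X 1 := by
    have : Finset.powersetCard 2 (Finset.univ : Finset (Fin 2)) = {Finset.univ} := by decide
    rw [esymm, this, Finset.sum_singleton, Fin.prod_univ_two]
  let θ : MvPolynomial (Fin 2) K →ₐ[K] MvPolynomial (Fin 2) K := aeval ![X 0, -X 1]
  have hθ : ∀ x, θ (θ x) = x := by
    intro x
    have : θ.comp θ = AlgHom.id K _ := by
      apply MvPolynomial.algHom_ext
      intro i
      fin_cases i <;> simp [θ]
    exact DFunLike.congr_fun this x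
  have hφ : ∀ x, aeval ![(X 0 + X 1 : MvPolynomial (Fin 2) K), -(X 0 * X 1)] x
      = (esymmAlgHom (Fin 2) K 2 (θ x) : MvPolynomial (Fin 2) K) := by
    intro x
    have : aeval ![(X 0 + X 1 : MvPolynomial (Fin 2) K), -(X 0 * X 1)]
      = ((symmetricSubalgebra (Fin 2) K).val.comp (esymmAlgHom (Fin 2) K 2)).comp θ := by
      apply MvPolynomial.algHom_ext
      intro i
      fin_cases i <;> simp [θ, esymmAlgHom, e1, e2]
    exact DFunLike.congr_fun this x
  have hinj : Function.Injective (esymmAlgHom (Fin 2) K 2) :=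
    (esymmAlgHom_fin_bijective K 2).1
  rw [hφ, hφ] at h
  obtain ⟨g, hg⟩ := h
  have hq0 : (esymmAlgHom (Fin 2) K 2 (θ q) : MvPolynomial (Fin 2) K) ≠ 0 := by
    intro h0
    have h1 : esymmAlgHom (Fin 2) K 2 (θ q) = 0 := Subtype.ext h0
    have h2 : θ q = 0 := hinj (h1.trans (map_zero _).symm)
    apply hq
    rw [← hθ q, h2, map_zero]
  have hs : g.IsSymmetric := by
    intro e
    have h1 := congrArg (rename e) hg
    rw [map_mul, (esymmAlgHom (Fin 2) K 2 (θ q)).2 e, (esymmAlgHom (Fin 2) K 2 (θ p)).2 e,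
      hg] at h1
    exact (mul_left_cancel₀ hq0 h1).symm
  obtain ⟨r, hr⟩ := (esymmAlgHom_fin_bijective K 2).2 ⟨g, hs⟩
  have h3 : θ p = θ q * r := by
    apply hinj
    apply Subtype.ext
    rw [map_mul, hr]
    exact hg
  refine ⟨θ r, ?_⟩
  rw [← hθ p, h3, map_mul, hθ]
end

section
/- Let n ≥ 1 and k ≥ 0. The complete homogeneous symmetric polynomial h_k in n variables, evaluated at the geometric progression a^{n−1}, a^{n−2}b, …, ab^{n−2}, b^{n−1}, equals P(a+b, −ab) in ℤ[a,b], where P ∈ ℤ[s,t] is the Fibonomial polynomial of type (n+k−1, k), i.e. the unique polynomial with P·{k}!_{s,t}·{n−1}!_{s,t} = {n+k−1}!_{s,t}. -/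
open MvPolynomial

noncomputable def hh {σ R : Type} [Fintype σ] [DecidableEq σ] [CommRing R] (k : ℕ) (f : σ → R) : R :=
  ∑ s : Sym σ k, (s.1.map f).prod

theorem hh_equiv {σ τ R : Type} [Fintype σ] [DecidableEq σ] [Fintype τ] [DecidableEq τ]
    [CommRing R] (k : ℕ) (e : σ ≃ τ) (f : τ → R) : hh k (fun i => f (e i)) = hh k f := by
  unfold hh
  refine Fintype.sum_equiv (Sym.equivCongr e) _ _ ?_
  intro s
  simp [Sym.equivCongr, Sym.map, Multiset.map_map]

theorem hh_option {σ R : Type} [Fintype σ] [DecidableEq σ]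
    [CommRing R] (k : ℕ) (f : Option σ → R) :
    hh (k+1) f = f none * hh k f + hh (k+1) (fun i => f (some i)) := by
  unfold hh
  rw [← Equiv.sum_comp (symOptionSuccEquiv (α := σ) (n := k)).symm, Fintype.sum_sum_type, Finset.mul_sum]
  congr 1
  · refine Finset.sum_congr rfl fun s _ => ?_
    change (Multiset.map f (none ::ₘ s.1)).prod = _
    rw [Multiset.map_cons, Multiset.prod_cons]
  · refine Finset.sum_congr rfl fun s _ => ?_
    simp [symOptionSuccEquiv, SymOptionSuccEquiv.decode, Sym.map, Multiset.map_map, Function.comp_def]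

theorem hh_fin {R : Type} [CommRing R] (n k : ℕ) (f : Fin (n+1) → R) :
    hh (k+1) f = f 0 * hh k f + hh (k+1) (fun i : Fin n => f i.succ) := by
  have h := hh_option k (fun o => f ((finSuccEquiv n).symm o))
  rw [hh_equiv, hh_equiv] at h
  simpa using h

theorem hh_scale {σ R : Type} [Fintype σ] [DecidableEq σ] [CommRing R] (k : ℕ) (c : R) (f : σ → R) :
    hh k (fun i => f i * c) = c ^ k * hh k f := by
  unfold hh
  rw [Finset.mul_sum]
  refine Finset.sum_congr rfl fun s _ => ?_
  have : Multiset.card (s : Multiset σ) = k := s.2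
  rw [Multiset.prod_map_mul]
  simp [mul_comm]

theorem hh_zero {σ R : Type} [Fintype σ] [DecidableEq σ] [CommRing R] (f : σ → R) :
    hh 0 f = 1 := by
  simp [hh, Sym.eq_nil_of_card_zero]

noncomputable def geo (n k : ℕ) : MvPolynomial (Fin 2) ℤ :=
  hh k (fun i : Fin n => (X 0 : MvPolynomial (Fin 2) ℤ) ^ (n - 1 - (i : ℕ)) * X 1 ^ (i : ℕ))

theorem geo_rec (n k : ℕ) :
    geo (n+1) (k+1) = X 0 ^ n * geo (n+1) k + X 1 ^ (k+1) * geo n (k+1) := by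
  unfold geo
  rw [hh_fin, ← hh_scale]
  have h2 : (fun i : Fin n => (X 0 : MvPolynomial (Fin 2) ℤ) ^ (n + 1 - 1 - (i.succ : ℕ)) *
      X 1 ^ (i.succ : ℕ)) = fun i : Fin n => X 0 ^ (n - 1 - (i : ℕ)) * X 1 ^ (i : ℕ) * X 1 := by
    funext i
    have : n + 1 - 1 - (i.succ : ℕ) = n - 1 - (i : ℕ) := by simp; omega
    rw [this, Fin.val_succ, pow_succ, mul_assoc]
  rw [h2]
  simp only [Fin.val_zero, Nat.sub_zero, Nat.add_sub_cancel, pow_zero, mul_one]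

theorem geo_one (k : ℕ) : geo 1 k = 1 := by
  induction k with
  | zero => exact hh_zero _
  | succ k ih =>
    rw [geo_rec, ih]
    simp [geo, hh]

noncomputable def phi : MvPolynomial (Fin 2) ℤ →ₐ[ℤ] MvPolynomial (Fin 2) ℤ :=
  aeval ![(X 0 + X 1 : MvPolynomial (Fin 2) ℤ), -(X 0 * X 1)]

theorem phi_rec (m : ℕ) : phi (gfib (m+2)) = (X 0 + X 1) * phi (gfib (m+1)) - X 0 * X 1 * phi (gfib m) := by
  simp [gfib, phi]; ring

theorem phi_gfib (m : ℕ) : (X 0 - X 1) * phi (gfib m) = X 0 ^ m - X 1 ^ m ∧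
    (X 0 - X 1) * phi (gfib (m+1)) = X 0 ^ (m+1) - X 1 ^ (m+1) := by
  induction m with
  | zero => simp [gfib]
  | succ m ih =>
    refine ⟨ih.2, ?_⟩
    rw [phi_rec]
    linear_combination (X 0 + X 1) * ih.2 - X 0 * X 1 * ih.1

theorem phi_ne (m : ℕ) : phi (gfib (m+1)) ≠ 0 := by
  intro h
  have h2 := (phi_gfib m).2
  rw [h] at h2
  have := congrArg (aeval ![(1:ℤ), 0]) h2
  simp at this

theorem phi_fact_ne (m : ℕ) : phi (gfibFact m) ≠ 0 := by
  induction m with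
  | zero => simp [gfibFact]
  | succ m ih => rw [gfibFact, map_mul]; exact mul_ne_zero (phi_ne m) ih

theorem phi_add (n k : ℕ) : phi (gfib (n + k)) =
    X 0 ^ n * phi (gfib k) + X 1 ^ k * phi (gfib n) := by
  have hne : (X 0 - X 1 : MvPolynomial (Fin 2) ℤ) ≠ 0 := by
    intro h
    have := congrArg (aeval ![(1:ℤ), 0]) h
    simp at this
  apply mul_left_cancel₀ hne
  rw [(phi_gfib _).1]
  linear_combination - X 0 ^ n * (phi_gfib k).1 - X 1 ^ k * (phi_gfib n).1

theorem geo_main (n k : ℕ) :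
    geo (n+1) k * phi (gfibFact k) * phi (gfibFact n) = phi (gfibFact (n + k)) := by
  induction n generalizing k with
  | zero => simp [geo_one, gfibFact]
  | succ n ihn =>
    induction k with
    | zero => simp [geo, hh_zero, gfibFact]
    | succ k ihk =>
      have h1 := ihn (k+1)
      have e : n + 1 + (k + 1) = (n + 1 + k) + 1 := by ring
      have e2 : n + (k + 1) = n + 1 + k := by ring
      rw [e2] at h1
      have a3 : phi (gfibFact (n+1+k+1)) = phi (gfib (n+1+(k+1))) * phi (gfibFact (n+1+k)) := by
        rw [gfibFact, map_mul]; rfl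
      rw [geo_rec, e, a3, phi_add]
      have a1 : phi (gfibFact (k+1)) = phi (gfib (k+1)) * phi (gfibFact k) := by
        rw [gfibFact, map_mul]
      have a2 : phi (gfibFact (n+1)) = phi (gfib (n+1)) * phi (gfibFact n) := by
        rw [gfibFact, map_mul]
      linear_combination X 0 ^ (n+1) * phi (gfib (k+1)) * ihk + X 1 ^ (k+1) * phi (gfib (n+1)) * h1
        + X 0 ^ (n+1) * geo (n+1+1) k * phi (gfibFact (n+1)) * a1
        + X 1 ^ (k+1) * geo (n+1) (k+1) * phi (gfibFact (k+1)) * a2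

/-- The complete homogeneous symmetric polynomial `h_k` in `n` variables, evaluated at the
geometric progression `a^{n-1}, a^{n-2}b, …, b^{n-1}`, equals `P(a+b, -ab)` where `P` is
the Fibonomial polynomial of type `(n+k-1, k)`. -/
theorem hsymm_geometric_eq_fibonomial (n k : ℕ) (hn : 1 ≤ n)
    (P : MvPolynomial (Fin 2) ℤ)
    (hP : P * gfibFact k * gfibFact (n - 1) = gfibFact (n + k - 1)) :
    aeval (fun i : Fin n => (X 0 : MvPolynomial (Fin 2) ℤ) ^ (n - 1 - (i : ℕ)) * X 1 ^ (i : ℕ))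
        (hsymm (Fin n) ℤ k)
      = aeval ![(X 0 + X 1 : MvPolynomial (Fin 2) ℤ), -(X 0 * X 1)] P := by
  obtain ⟨n, rfl⟩ : ∃ m, n = m + 1 := ⟨n - 1, by omega⟩
  have hl : aeval (fun i : Fin (n+1) =>
      (X 0 : MvPolynomial (Fin 2) ℤ) ^ (n + 1 - 1 - (i : ℕ)) * X 1 ^ (i : ℕ))
        (hsymm (Fin (n+1)) ℤ k) = geo (n+1) k := by
    simp only [hsymm, geo, hh, map_sum]
    refine Finset.sum_congr rfl fun s _ => ?_
    rw [map_multiset_prod, Multiset.map_map]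
    simp [Function.comp_def]
  rw [hl]
  change _ = phi P
  have h1 := geo_main n k
  have e : n + 1 + k - 1 = n + k := by omega
  rw [e, Nat.add_sub_cancel] at hP
  rw [← hP, map_mul, map_mul] at h1
  exact mul_right_cancel₀ (phi_fact_ne k) (mul_right_cancel₀ (phi_fact_ne n) h1)
end

section
/- Let 0 ≤ k ≤ n. The elementary symmetric polynomial e_k in n variables, evaluated at the geometric progression a^{n−1}, a^{n−2}b, …, ab^{n−2}, b^{n−1}, equals (ab)^{k(k−1)/2} · P(a+b, −ab) in ℤ[a,b], where P ∈ ℤ[s,t] is the Fibonomial polynomial, i.e. the unique polynomial with P·{k}!_{s,t}·{n−k}!_{s,t} = {n}!_{s,t}. -/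
open MvPolynomial

noncomputable def gphi : MvPolynomial (Fin 2) ℤ →ₐ[ℤ] MvPolynomial (Fin 2) ℤ :=
  aeval ![(X 0 + X 1 : MvPolynomial (Fin 2) ℤ), -(X 0 * X 1)]

theorem gphi_gfib_rec (m : ℕ) : gphi (gfib (m + 2)) =
    (X 0 + X 1) * gphi (gfib (m + 1)) - X 0 * X 1 * gphi (gfib m) := by
  rw [gfib]
  simp [gphi]
  ring

theorem gphi_gfib_zero : gphi (gfib 0) = 0 := by simp [gfib]

theorem gphi_gfib_one : gphi (gfib 1) = 1 := by simp [gfib]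

theorem gphi_gfib_succ (m : ℕ) :
    gphi (gfib (m + 1)) = X 0 ^ m + X 1 * gphi (gfib m) := by
  induction m with
  | zero => simp [gphi_gfib_zero, gphi_gfib_one]
  | succ m ih =>
    rw [gphi_gfib_rec, pow_succ]
    linear_combination X 0 * ih

theorem gphi_gfib_add (m n : ℕ) :
    gphi (gfib (m + n)) = X 0 ^ m * gphi (gfib n) + X 1 ^ n * gphi (gfib m) := by
  induction n using Nat.twoStepInduction with
  | zero => simp [gphi_gfib_zero]
  | one => rw [gphi_gfib_succ, gphi_gfib_one]; ring
  | more n h1 h2 =>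
    rw [← add_assoc, gphi_gfib_rec, gphi_gfib_rec, add_assoc, h1, h2]
    ring

theorem gphi_gfib_eval (m : ℕ) : eval ![1, 0] (gphi (gfib (m + 1))) = 1 := by
  rw [gphi_gfib_succ]; simp

theorem gphi_fact_eval (m : ℕ) : eval ![1, 0] (gphi (gfibFact m)) = 1 := by
  induction m with
  | zero => simp [gfibFact]
  | succ m ih => rw [gfibFact, map_mul, map_mul, gphi_gfib_eval, ih, one_mul]

theorem gphi_fact_ne (m : ℕ) : gphi (gfibFact m) ≠ 0 := by
  intro h
  have := gphi_fact_eval m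
  rw [h] at this
  simp at this

theorem esymm_cons_succ {R : Type*} [CommRing R] (x : R) (s : Multiset R) (k : ℕ) :
    (x ::ₘ s).esymm (k + 1) = s.esymm (k + 1) + x * s.esymm k := by
  simp [Multiset.esymm, Multiset.powersetCard_cons, Multiset.sum_map_mul_left]

theorem esymm_scale {R : Type*} [CommRing R] (x : R) (s : Multiset R) (k : ℕ) :
    (s.map (fun y => x * y)).esymm k = x ^ k * s.esymm k := by
  induction s using Multiset.induction_on generalizing k with
  | empty => cases k <;> simp [Multiset.esymm, Multiset.powersetCard_zero_right]
  | cons y s ih =>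
    cases k with
    | zero => simp [Multiset.esymm]
    | succ k => rw [Multiset.map_cons, esymm_cons_succ, esymm_cons_succ, ih, ih]; ring

noncomputable def geoE (n k : ℕ) : MvPolynomial (Fin 2) ℤ :=
  ((Multiset.range n).map (fun i => X 0 ^ (n - 1 - i) * X 1 ^ i)).esymm k

theorem geoE_zero (n : ℕ) : geoE n 0 = 1 := by simp [geoE, Multiset.esymm]

theorem geoE_gt (n k : ℕ) (h : n < k) : geoE n k = 0 := by
  rw [geoE, Multiset.esymm, Multiset.powersetCard_eq_empty]
  · simp
  · simpa using h

theorem geoE_succ (n k : ℕ) :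
    geoE (n + 1) (k + 1) = X 0 ^ (k + 1) * geoE n (k + 1) + X 1 ^ n * X 0 ^ k * geoE n k := by
  have h : (Multiset.range n).map
      (fun i => (X 0 : MvPolynomial (Fin 2) ℤ) ^ (n + 1 - 1 - i) * X 1 ^ i) =
      ((Multiset.range n).map (fun i => X 0 ^ (n - 1 - i) * X 1 ^ i)).map (fun y => X 0 * y) := by
    rw [Multiset.map_map]
    apply Multiset.map_congr rfl
    intro i hi
    rw [Multiset.mem_range] at hi
    rw [show n + 1 - 1 - i = (n - 1 - i) + 1 by omega]
    simp only [Function.comp]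
    ring
  rw [geoE, Multiset.range_succ, Multiset.map_cons, esymm_cons_succ, h, esymm_scale, esymm_scale,
    ← geoE, ← geoE]
  simp
  ring

theorem geoE_main (n : ℕ) : ∀ k j : ℕ, k + j = n →
    geoE n k * gphi (gfibFact k) * gphi (gfibFact j) =
      (X 0 * X 1) ^ (k * (k - 1) / 2) * gphi (gfibFact n) := by
  induction n with
  | zero =>
    intro k j h
    obtain ⟨rfl, rfl⟩ : k = 0 ∧ j = 0 := by omega
    simp [geoE_zero, gfibFact]
  | succ n ih =>
    intro k j h
    cases k with
    | zero =>
      obtain rfl : j = n + 1 := by omega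
      simp [geoE_zero, gfibFact]
    | succ k =>
      have hc : (k + 1) * (k + 1 - 1) / 2 = k * (k - 1) / 2 + k := by
        rw [← Nat.choose_two_right, ← Nat.choose_two_right, Nat.choose_succ_succ' k 1]
        simp [add_comm]
      have h2 := ih k j (by omega)
      rw [geoE_succ, hc, pow_add (X 0 * X 1)]
      generalize k * (k - 1) / 2 = c at hc h2 ⊢
      cases j with
      | zero =>
        obtain rfl : k = n := by omega
        rw [geoE_gt _ _ (Nat.lt_succ_self _)]
        rw [gfibFact.eq_2 k, map_mul, mul_pow (X 0) (X 1) k]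
        linear_combination X 1 ^ k * X 0 ^ k * gphi (gfib (k + 1)) * h2
      | succ j =>
        have h1 := ih (k + 1) j (by omega)
        rw [hc, pow_add] at h1
        have hf := gphi_gfib_add (k + 1) (j + 1)
        obtain rfl : n = k + j + 1 := by omega
        rw [show k + 1 + (j + 1) = k + j + 1 + 1 by omega] at hf
        rw [gfibFact.eq_2 (k + j + 1), map_mul, hf]
        rw [gfibFact.eq_2 k, map_mul] at h1 ⊢
        rw [gfibFact.eq_2 j, map_mul] at h2 ⊢
        rw [mul_pow (X 0) (X 1) k] at h1 ⊢
        linear_combination X 1 ^ (k + j + 1) * X 0 ^ k * gphi (gfib (k + 1)) * h2 +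
          X 0 ^ (k + 1) * gphi (gfib (j + 1)) * h1

/-- The elementary symmetric polynomial `e_k` in `n` variables, evaluated at the geometric
progression `a^{n-1}, a^{n-2}b, …, b^{n-1}`, equals `(ab)^{k(k-1)/2} · P(a+b, -ab)` where
`P` is the Fibonomial polynomial of type `(n, k)`. -/
theorem esymm_geometric_eq_fibonomial (n k : ℕ) (hk : k ≤ n)
    (P : MvPolynomial (Fin 2) ℤ)
    (hP : P * gfibFact k * gfibFact (n - k) = gfibFact n) :
    aeval (fun i : Fin n => (X 0 : MvPolynomial (Fin 2) ℤ) ^ (n - 1 - (i : ℕ)) * X 1 ^ (i : ℕ))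
        (esymm (Fin n) ℤ k)
      = (X 0 * X 1) ^ (k * (k - 1) / 2) *
          aeval ![(X 0 + X 1 : MvPolynomial (Fin 2) ℤ), -(X 0 * X 1)] P := by
  have hE : aeval (fun i : Fin n => (X 0 : MvPolynomial (Fin 2) ℤ) ^ (n - 1 - (i : ℕ)) *
      X 1 ^ (i : ℕ)) (esymm (Fin n) ℤ k) = geoE n k := by
    rw [aeval_esymm_eq_multiset_esymm, geoE]
    congr 1
    rw [← Finset.range_val, ← Nat.Iio_eq_range, ← Fin.map_valEmbedding_univ]
    rw [Finset.map_val, Multiset.map_map]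
    rfl
  rw [hE]
  change _ = _ * gphi P
  have h1 := geoE_main n k (n - k) (by omega)
  rw [← hP, map_mul, map_mul] at h1
  apply mul_right_cancel₀ (gphi_fact_ne k)
  apply mul_right_cancel₀ (gphi_fact_ne (n - k))
  rw [h1]
  ring
end

section
/- (Dihedral sieving for k-subsets.) Let n be odd, 0 ≤ k ≤ n, let P ∈ ℤ[s,t] be the unique polynomial with P·{k}!_{s,t}·{n−k}!_{s,t} = {n}!_{s,t}, and let ζ = exp(2πi/n) ∈ ℂ. Then for every integer ℓ, P(ζ^ℓ + ζ^{−ℓ}, −1) equals the number of k-element subsets A of ℤ/nℤ with {x+ℓ : x ∈ A} = A; and P(0, 1) equals the number of k-element subsets A of ℤ/nℤ with {−x : x ∈ A} = A. -/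
open MvPolynomial

/-- The primitive `n`-th root of unity `ζ = exp(2πi/n)`. -/
noncomputable def primRoot (n : ℕ) : ℂ := Complex.exp (2 * Real.pi * Complex.I / n)

open Polynomial in
/-- The product `∏_{i<n} (1 + a^i b^(n-1-i) x)`. -/
noncomputable def wProd {R : Type*} [CommRing R] (a b : R) (n : ℕ) : Polynomial R :=
  ∏ i ∈ Finset.range n, (1 + Polynomial.C (a ^ i * b ^ (n - 1 - i)) * Polynomial.X)

theorem wProd_map {R S : Type*} [CommRing R] [CommRing S] (f : R →+* S) (a b : R) (n : ℕ) :
    (wProd a b n).map f = wProd (f a) (f b) n := by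
  simp [wProd, Polynomial.map_prod]

theorem wProd_succ {R : Type*} [CommRing R] (a b : R) (n : ℕ) :
    wProd a b (n + 1) =
      ((wProd a b n).comp (Polynomial.C b * Polynomial.X)) *
        (1 + Polynomial.C (a ^ n) * Polynomial.X) := by
  unfold wProd
  rw [Finset.prod_range_succ, Polynomial.prod_comp]
  congr 1
  · apply Finset.prod_congr rfl
    intro i hi
    have hi := Finset.mem_range.mp hi
    have : n + 1 - 1 - i = (n - 1 - i) + 1 := by omega
    rw [this]
    simp [pow_succ]
    ring
  · simp

theorem wProd_coeff_zero {R : Type*} [CommRing R] (a b : R) (n : ℕ) :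
    (wProd a b n).coeff 0 = 1 := by
  simp [wProd, Polynomial.coeff_zero_prod]

theorem wProd_coeff_succ {R : Type*} [CommRing R] (a b : R) (n k : ℕ) :
    (wProd a b (n + 1)).coeff (k + 1) =
      b ^ (k + 1) * (wProd a b n).coeff (k + 1) + a ^ n * b ^ k * (wProd a b n).coeff k := by
  rw [wProd_succ, mul_add, mul_one, Polynomial.coeff_add, ← mul_assoc, Polynomial.coeff_mul_X,
    Polynomial.coeff_mul_C, Polynomial.comp_C_mul_X_coeff, Polynomial.comp_C_mul_X_coeff]
  ring

theorem wProd_coeff_gt {R : Type*} [CommRing R] (a b : R) (n : ℕ) :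
    ∀ k, n < k → (wProd a b n).coeff k = 0 := by
  induction n with
  | zero => intro k hk; simp [wProd, Polynomial.coeff_one]; omega
  | succ n ih =>
    intro k hk
    obtain ⟨k, rfl⟩ : ∃ j, k = j + 1 := ⟨k - 1, by omega⟩
    rw [wProd_coeff_succ, ih _ (by omega), ih _ (by omega)]; simp

/-- specialised Fibonacci numbers -/
def sfib {R : Type*} [CommRing R] (a b : R) : ℕ → R
  | 0 => 0
  | 1 => 1
  | (m + 2) => (a + b) * sfib a b (m + 1) + (-(a * b)) * sfib a b m

/-- specialised factorial -/
def sfact {R : Type*} [CommRing R] (a b : R) : ℕ → R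
  | 0 => 1
  | (m + 1) => sfib a b (m + 1) * sfact a b m

theorem aeval_gfib {R : Type*} [CommRing R] (a b : R) :
    ∀ m, aeval ![a + b, -(a * b)] (gfib m) = sfib a b m
  | 0 => by simp [gfib, sfib]
  | 1 => by simp [gfib, sfib]
  | (m + 2) => by
    simp only [gfib, sfib, map_add, map_mul, aeval_gfib a b m, aeval_gfib a b (m+1), aeval_X]
    simp

theorem aeval_gfibFact {R : Type*} [CommRing R] (a b : R) (m : ℕ) :
    aeval ![a + b, -(a * b)] (gfibFact m) = sfact a b m := by
  induction m with
  | zero => simp [gfibFact, sfact]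
  | succ m ih => simp [gfibFact, sfact, ih, aeval_gfib]

theorem sfib_succ {R : Type*} [CommRing R] (a b : R) (n : ℕ) :
    sfib a b (n + 1) = a * sfib a b n + b ^ n ∧ sfib a b (n + 1) = b * sfib a b n + a ^ n := by
  induction n with
  | zero => simp [sfib]
  | succ n ih =>
    constructor
    · rw [sfib, pow_succ]; linear_combination b * ih.1
    · rw [sfib, pow_succ]; linear_combination a * ih.2

theorem sfib_add {R : Type*} [CommRing R] (a b : R) (m n : ℕ) :
    sfib a b (m + n) = a ^ m * sfib a b n + b ^ n * sfib a b m := by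
  induction m with
  | zero => simp [sfib]
  | succ m ih =>
    rw [show m + 1 + n = (m + n) + 1 by ring, (sfib_succ a b (m+n)).1, (sfib_succ a b m).1, ih]
    ring

theorem wProd_fact {R : Type*} [CommRing R] (a b : R) (n : ℕ) :
    ∀ k j, k + j = n → (wProd a b n).coeff k * sfact a b k * sfact a b j
      = (a * b) ^ (k.choose 2) * sfact a b n := by
  induction n with
  | zero =>
    intro k j h
    obtain ⟨rfl, rfl⟩ : k = 0 ∧ j = 0 := by omega
    simp [wProd, sfact]
  | succ n ih =>
    intro k j h
    rcases k with _ | k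
    · obtain rfl : j = n + 1 := by omega
      simp [wProd_coeff_zero, sfact]
    · rw [wProd_coeff_succ]
      have h2 := ih k j (by omega)
      have hc : (k + 1).choose 2 = k.choose 2 + k := by
        rw [Nat.choose_succ_succ' k 1]; simp; ring
      rcases j with _ | j
      · obtain rfl : k = n := by omega
        rw [wProd_coeff_gt _ _ _ (k+1) (by omega), hc]
        simp only [sfact] at h2 ⊢
        linear_combination a ^ k * b ^ k * sfib a b (k+1) * h2
      · have h1 := ih (k + 1) j (by omega)
        rw [hc] at h1 ⊢
        obtain rfl : n = k + 1 + j := by omega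
        have hadd := sfib_add a b (j + 1) (k + 1)
        rw [show j + 1 + (k + 1) = k + 1 + j + 1 by ring] at hadd
        simp only [sfact] at h1 h2 ⊢
        rw [hadd]
        linear_combination b ^ (k+1) * sfib a b (j+1) * h1 +
          a ^ (k+1+j) * b ^ k * sfib a b (k+1) * h2

theorem sfib_one_zero (m : ℕ) : sfib (1:ℤ) 0 (m+1) = 1 := by
  induction m with
  | zero => simp [sfib]
  | succ m ih => rw [sfib, ih]; simp

theorem sfact_one_zero (m : ℕ) : sfact (1:ℤ) 0 m = 1 := by
  induction m with
  | zero => simp [sfact]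
  | succ m ih => rw [sfact, ih, sfib_one_zero]; simp

theorem aeval_comp' {R S : Type*} [CommRing R] [CommRing S] (f : R →+* S) (a b : R)
    (P : MvPolynomial (Fin 2) ℤ) :
    f (aeval ![a + b, -(a * b)] P) = aeval ![f a + f b, -(f a * f b)] P := by
  have := MvPolynomial.comp_aeval_apply (![a + b, -(a * b)]) (f.toIntAlgHom) P
  rw [show f (aeval ![a + b, -(a * b)] P) = f.toIntAlgHom (aeval ![a + b, -(a * b)] P) from rfl,
    this]
  congr 2
  funext i
  fin_cases i <;> simp

theorem sfact_X_ne (m : ℕ) :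
    sfact (X 0 : MvPolynomial (Fin 2) ℤ) (X 1) m ≠ 0 := by
  intro h
  have h1 := aeval_gfibFact (X 0 : MvPolynomial (Fin 2) ℤ) (X 1) m
  rw [h] at h1
  have h2 := aeval_comp' (aeval ![(1:ℤ), 0] : MvPolynomial (Fin 2) ℤ →ₐ[ℤ] ℤ).toRingHom
    (X 0 : MvPolynomial (Fin 2) ℤ) (X 1) (gfibFact m)
  rw [h1, aeval_gfibFact] at h2
  simp [sfact_one_zero] at h2

theorem key0 {R : Type*} [CommRing R] [IsDomain R] (a b : R) (h0 : ∀ m, sfact a b m ≠ 0)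
    (n k : ℕ) (hk : k ≤ n) (P : MvPolynomial (Fin 2) ℤ)
    (hP : P * gfibFact k * gfibFact (n - k) = gfibFact n) :
    (wProd a b n).coeff k = (a * b) ^ (k.choose 2) * aeval ![a + b, -(a * b)] P := by
  have h1 := congrArg (aeval ![a + b, -(a * b)] : MvPolynomial (Fin 2) ℤ →ₐ[ℤ] R) hP
  rw [map_mul, map_mul, aeval_gfibFact, aeval_gfibFact, aeval_gfibFact] at h1
  have h2 := wProd_fact a b n k (n - k) (by omega)
  rw [← h1] at h2
  apply mul_right_cancel₀ (h0 k)
  apply mul_right_cancel₀ (h0 (n-k))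
  rw [h2]; ring

theorem key (n k : ℕ) (hk : k ≤ n) (P : MvPolynomial (Fin 2) ℤ)
    (hP : P * gfibFact k * gfibFact (n - k) = gfibFact n) (α β : ℂ) :
    (wProd α β n).coeff k = (α * β) ^ (k.choose 2) * aeval ![α + β, -(α * β)] P := by
  have h3 := key0 (X 0 : MvPolynomial (Fin 2) ℤ) (X 1) sfact_X_ne n k hk P hP
  have h4 := congrArg (aeval ![α, β] : MvPolynomial (Fin 2) ℤ →ₐ[ℤ] ℂ).toRingHom h3
  rw [map_mul, map_pow, map_mul, aeval_comp', ← Polynomial.coeff_map, wProd_map] at h4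
  simpa using h4

/-- Counting saturated subsets. -/
theorem count_sat {A B : Type*} [Fintype A] [Fintype B] [DecidableEq A] [DecidableEq B]
    (f : A → B) (hf : Function.Surjective f) (p : Finset A → Prop)
    (hp : ∀ S, p S ↔ ∀ x y, f x = f y → x ∈ S → y ∈ S) (k : ℕ) :
    (Nat.card {S : Finset A // S.card = k ∧ p S} : ℂ) =
      (∏ b : B, (1 + (Polynomial.X : Polynomial ℂ) ^
        (Finset.univ.filter (fun x => f x = b)).card)).coeff k := by
  have e : {S : Finset A // S.card = k ∧ p S} ≃
      {T : Finset B // (∑ b ∈ T, (Finset.univ.filter (fun x => f x = b)).card) = k} := by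
    have hcard : ∀ T : Finset B, (Finset.univ.filter (fun x => f x ∈ T)).card =
        ∑ b ∈ T, (Finset.univ.filter (fun x => f x = b)).card := by
      intro T
      rw [Finset.card_eq_sum_card_fiberwise (f := f) (t := T) (by intro x; simp)]
      apply Finset.sum_congr rfl
      intro b hb
      congr 1
      ext x
      simp
      rintro rfl
      exact hb
    have himg : ∀ S : Finset A, p S → Finset.univ.filter (fun x => f x ∈ S.image f) = S := by
      intro S hS
      ext x
      simp only [Finset.mem_filter, Finset.mem_univ, true_and, Finset.mem_image]
      constructor
      · rintro ⟨y, hy, hyx⟩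
        exact (hp S).1 hS y x hyx hy
      · intro h; exact ⟨x, h, rfl⟩
    refine ⟨fun S => ⟨S.1.image f, ?_⟩, fun T => ⟨Finset.univ.filter (fun x => f x ∈ T.1), ?_, ?_⟩, ?_, ?_⟩
    · rw [← hcard, himg _ S.2.2, S.2.1]
    · rw [hcard, T.2]
    · rw [hp]
      intro x y hxy hx
      simpa [hxy] using hx
    · intro S
      exact Subtype.ext (himg _ S.2.2)
    · intro T
      apply Subtype.ext
      ext b
      simp only [Finset.mem_filter, Finset.mem_univ, true_and, Finset.mem_image]
      constructor
      · rintro ⟨y, hy, rfl⟩; exact hy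
      · intro h
        obtain ⟨x, rfl⟩ := hf b
        exact ⟨x, h, rfl⟩
  rw [Nat.card_congr e, Finset.prod_one_add, Polynomial.finsetSum_coeff]
  simp only [Finset.prod_pow_eq_pow_sum, Polynomial.coeff_X_pow, Finset.powerset_univ]
  rw [Finset.sum_boole, Nat.card_eq_fintype_card, Fintype.card_subtype]
  congr 2
  ext T
  simp [eq_comm]

theorem sign_coeff (m : ℕ) : ∀ k,
    ((1 + Polynomial.X) * (1 - Polynomial.X ^ 2) ^ m : Polynomial ℂ).coeff k
      = (-1) ^ (k.choose 2) *
      ((1 + Polynomial.X) * (1 + Polynomial.X ^ 2) ^ m : Polynomial ℂ).coeff k := by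
  induction m with
  | zero =>
    intro k
    rcases k with _ | _ | k
    · simp
    · simp
    · simp [Polynomial.coeff_one, Polynomial.coeff_X]
  | succ m ih =>
    intro k
    rw [pow_succ _ m, pow_succ _ m, ← mul_assoc, ← mul_assoc, mul_sub, mul_add, mul_one, mul_one,
      Polynomial.coeff_sub, Polynomial.coeff_add, ih k]
    rcases k with _ | _ | k
    · simp [Polynomial.coeff_mul_X_pow']
    · simp [Polynomial.coeff_mul_X_pow']
    · rw [Polynomial.coeff_mul_X_pow, Polynomial.coeff_mul_X_pow, ih k]
      have hc : (k + 2).choose 2 = k.choose 2 + 2 * k + 1 := by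
        rw [Nat.choose_succ_succ' (k+1) 1, Nat.choose_succ_succ' k 1]; simp; ring
      have hs : (-1 : ℂ) ^ ((k+2).choose 2) = - (-1) ^ (k.choose 2) := by
        rw [hc, pow_succ, pow_add, pow_mul]; simp
      rw [show k + 1 + 1 = k + 2 from rfl, hs]
      ring

theorem wProd_refl (m : ℕ) :
    wProd (1:ℂ) (-1) (2 * m + 1) = (1 + Polynomial.X) * (1 - Polynomial.X ^ 2) ^ m := by
  induction m with
  | zero => simp [wProd]
  | succ m ih =>
    rw [show 2 * (m + 1) + 1 = (2 * m + 1) + 1 + 1 by ring, wProd_succ, wProd_succ, ih]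
    simp
    ring

theorem refl_count (m k : ℕ) :
    (Nat.card {A : Finset (ZMod (2 * m + 1)) //
          A.card = k ∧ A.image (fun x => -x) = A} : ℂ) =
    ((1 + Polynomial.X) * (1 + Polynomial.X ^ 2) ^ m : Polynomial ℂ).coeff k := by
  have hlt : ∀ x : ZMod (2 * m + 1), x.valMinAbs.natAbs < m + 1 := by
    intro x
    have := ZMod.natAbs_valMinAbs_le x
    omega
  have hval : ∀ i : ℕ, i < m + 1 → ((i : ZMod (2 * m + 1)).valMinAbs) = i := by
    intro i hi
    apply ZMod.valMinAbs_natCast_of_le_half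
    omega
  have hcast : ∀ (x : ZMod (2*m+1)) (i : ℕ), i < m + 1 →
      (x.valMinAbs.natAbs = i ↔ (x = i ∨ x = -i)) := by
    intro x i hi
    have h := ZMod.natAbs_valMinAbs_eq_natAbs_valMinAbs (a := x) (b := (i : ZMod (2*m+1)))
    rw [hval i hi] at h
    simpa using h
  rw [count_sat (fun x : ZMod (2 * m + 1) => (⟨x.valMinAbs.natAbs, hlt x⟩ : Fin (m + 1)))]
  · rw [Fin.prod_univ_succ]
    congr 2
    · congr 1
      rw [show (Finset.univ.filter (fun x : ZMod (2*m+1) =>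
        (⟨x.valMinAbs.natAbs, hlt x⟩ : Fin (m + 1)) = 0)) = {0} from ?_]
      · simp
      · ext x
        simp [Fin.ext_iff]
    · rw [Finset.prod_congr rfl (g := fun _ => 1 + Polynomial.X ^ 2)]
      · simp
      · intro i _
        congr 2
        rw [show (Finset.univ.filter (fun x : ZMod (2*m+1) =>
          (⟨x.valMinAbs.natAbs, hlt x⟩ : Fin (m + 1)) = i.succ)) =
            {((i.1 + 1 : ℕ) : ZMod (2*m+1)), -((i.1 + 1 : ℕ) : ZMod (2*m+1))} from ?_]
        · apply Finset.card_pair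
          intro h
          have h2 : (((2 * (i.1 + 1) : ℕ)) : ZMod (2*m+1)) = 0 := by
            have := eq_neg_iff_add_eq_zero.1 h
            rw [← this]; push_cast; ring
          rw [ZMod.natCast_eq_zero_iff] at h2
          have := Nat.le_of_dvd (by omega) h2
          have := i.2
          omega
        · ext x
          have := hcast x (i.1 + 1) (by have := i.2; omega)
          simp only [Finset.mem_filter, Finset.mem_univ, true_and, Fin.ext_iff, Fin.val_succ,
            Finset.mem_insert, Finset.mem_singleton]
          exact this
  · intro i
    refine ⟨(i.1 : ZMod (2*m+1)), ?_⟩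
    ext
    simp [hval i.1 i.2]
  · intro S
    constructor
    · intro h x y hxy hx
      have hxy := Fin.ext_iff.1 hxy
      simp only at hxy
      rw [ZMod.natAbs_valMinAbs_eq_natAbs_valMinAbs] at hxy
      rcases hxy with rfl | rfl
      · exact hx
      · rw [← h] at hx
        simpa using hx
    · intro h
      have hneg : ∀ x, x ∈ S → -x ∈ S := fun x hx => h x (-x) (by simp) hx
      ext x
      simp only [Finset.mem_image]
      constructor
      · rintro ⟨y, hy, rfl⟩; exact hneg y hy
      · intro hx; exact ⟨-x, hneg x hx, by simp⟩

theorem rot_count (n k : ℕ) [NeZero n] (l : ZMod n) :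
    ∃ m, n = addOrderOf l * m ∧
    (Nat.card {A : Finset (ZMod n) //
          A.card = k ∧ A.image (fun x => x + l) = A} : ℂ) =
    ((1 + Polynomial.X ^ (addOrderOf l)) ^ m : Polynomial ℂ).coeff k := by
  classical
  let H := AddSubgroup.zmultiples l
  refine ⟨Nat.card (ZMod n ⧸ H), ?_, ?_⟩
  · have := AddSubgroup.card_eq_card_quotient_mul_card_addSubgroup H
    rw [Nat.card_zmod, Nat.card_zmultiples] at this
    rw [mul_comm]; exact this
  · rw [count_sat (QuotientAddGroup.mk : ZMod n → ZMod n ⧸ H) QuotientAddGroup.mk_surjective]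
    · congr 1
      rw [Finset.prod_congr rfl (g := fun _ => 1 + Polynomial.X ^ (addOrderOf l))]
      · simp
      · intro b _
        congr 2
        obtain ⟨b, rfl⟩ := QuotientAddGroup.mk_surjective b
        rw [← Nat.card_zmultiples, Nat.card_eq_fintype_card, ← Finset.card_univ]
        symm
        apply Finset.card_bij (fun (x : H) _ => b + x.1)
        · intro x _
          simp
        · intro x _ y _ h
          exact Subtype.ext (add_left_cancel h)
        · intro y hy
          simp only [Finset.mem_filter, Finset.mem_univ, true_and] at hy
          exact ⟨⟨-b + y, QuotientAddGroup.eq.1 hy.symm⟩, Finset.mem_univ _, by simp⟩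
    · intro S
      constructor
      · intro h x y hxy hx
        have hxy := QuotientAddGroup.eq.1 hxy
        have hl : ∀ z, z ∈ S → z + l ∈ S := by
          intro z hz
          rw [← h]; exact Finset.mem_image_of_mem _ hz
        have hnat : ∀ (j : ℕ) z, z ∈ S → z + j • l ∈ S := by
          intro j
          induction j with
          | zero => intro z hz; simpa using hz
          | succ j ih => intro z hz; rw [succ_nsmul, ← add_assoc]; exact hl _ (ih z hz)
        obtain ⟨j, hj⟩ := AddSubmonoid.mem_multiples_iff _ _ |>.1 (mem_multiples_iff_mem_zmultiples.2 hxy)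
        have := hnat j x hx
        rw [hj] at this
        simpa using this
      · intro h
        ext x
        simp only [Finset.mem_image]
        constructor
        · rintro ⟨y, hy, rfl⟩
          exact h y _ (by rw [QuotientAddGroup.eq]; simp [H]) hy
        · intro hx
          refine ⟨x - l, h x _ ?_ hx, by simp⟩
          rw [QuotientAddGroup.eq]
          simp [H, sub_eq_add_neg]

theorem prod_prim (d : ℕ) (hd : Odd d) (q : ℂ) (hq : IsPrimitiveRoot q d) :
    ∏ i ∈ Finset.range d, (1 + Polynomial.C (q ^ (2 * i + 1)) * Polynomial.X : Polynomial ℂ)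
      = 1 + Polynomial.X ^ d := by
  have hpos : 0 < d := hd.pos
  have : NeZero d := ⟨hpos.ne'⟩
  have hqC : IsPrimitiveRoot (Polynomial.C q) d :=
    hq.map_of_injective (f := Polynomial.C) Polynomial.C_injective
  have h := hqC.pow_add_pow_eq_prod_add_mul 1 (Polynomial.X : Polynomial ℂ) hd
  rw [one_pow] at h
  rw [h]
  have hq2 : IsPrimitiveRoot (Polynomial.C q ^ 2) d :=
    hqC.pow_of_coprime 2 (Nat.coprime_two_left.2 hd)
  apply Finset.prod_bij (fun i _ => Polynomial.C (q ^ (2 * i + 1)))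
  · intro i _
    rw [Polynomial.mem_nthRootsFinset hpos, ← Polynomial.C_pow, ← pow_mul, mul_comm, pow_mul,
      hq.pow_eq_one]
    simp
  · intro i hi j hj hij
    rw [Polynomial.C_pow, Polynomial.C_pow, pow_succ, pow_succ, pow_mul, pow_mul] at hij
    exact hq2.pow_inj (Finset.mem_range.1 hi) (Finset.mem_range.1 hj)
      (mul_right_cancel₀ (hqC.ne_zero hpos.ne') hij)
  · intro z hz
    rw [Polynomial.mem_nthRootsFinset hpos] at hz
    have : (z * Polynomial.C q ^ (d - 1)) ^ d = 1 := by
      rw [mul_pow, hz, ← pow_mul, mul_comm (d - 1) d, pow_mul, hqC.pow_eq_one]; simp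
    obtain ⟨i, hi, hi2⟩ := hq2.eq_pow_of_pow_eq_one this
    refine ⟨i, Finset.mem_range.2 hi, ?_⟩
    rw [Polynomial.C_pow, pow_succ, pow_mul, hi2, mul_assoc, ← pow_succ, Nat.sub_add_cancel hpos,
      hqC.pow_eq_one, mul_one]
  · intro i _
    rfl

theorem wProd_rot (d m : ℕ) (hd : Odd d) (q : ℂ) (hq : IsPrimitiveRoot q d) :
    wProd q q⁻¹ (d * m) = (1 + Polynomial.X ^ d) ^ m := by
  have hq0 : q ≠ 0 := hq.ne_zero hd.pos.ne'
  have h1 : wProd q q⁻¹ (d * m) =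
      ∏ i ∈ Finset.range (d * m), (1 + Polynomial.C (q ^ (2 * i + 1)) * Polynomial.X) := by
    unfold wProd
    apply Finset.prod_congr rfl
    intro i hi
    have hi := Finset.mem_range.1 hi
    congr 3
    rw [inv_pow, ← div_eq_mul_inv, div_eq_iff (pow_ne_zero _ hq0), ← pow_add,
      show 2 * i + 1 + (d * m - 1 - i) = i + d * m by omega, pow_add, pow_mul, hq.pow_eq_one]
    simp
  rw [h1]
  clear h1
  induction m with
  | zero => simp
  | succ m ih =>
    rw [Nat.mul_succ, Finset.prod_range_add, ih, pow_succ, ← prod_prim d hd q hq]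
    congr 1
    apply Finset.prod_congr rfl
    intro i _
    congr 3
    rw [show 2 * (d * m + i) + 1 = d * (2 * m) + (2 * i + 1) by ring, pow_add, pow_mul,
      hq.pow_eq_one]
    simp

theorem prim_order (n : ℕ) [NeZero n] (l : ℤ) :
    IsPrimitiveRoot (primRoot n ^ l) (addOrderOf (l : ZMod n)) := by
  have hz : IsPrimitiveRoot (primRoot n) n := Complex.isPrimitiveRoot_exp n (NeZero.ne n)
  have key : ∀ j : ℕ, (primRoot n ^ l) ^ j = 1 ↔ addOrderOf (l : ZMod n) ∣ j := by
    intro j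
    rw [addOrderOf_dvd_iff_nsmul_eq_zero, ← zpow_natCast, ← zpow_mul, hz.zpow_eq_one_iff_dvd,
      ← ZMod.intCast_zmod_eq_zero_iff_dvd]
    simp [mul_comm]
  exact ⟨(key _).2 dvd_rfl, fun j hj => (key j).1 hj⟩

/-- Dihedral sieving for `k`-subsets of `ℤ/nℤ`, `n` odd: the Fibonomial polynomial `P`
evaluated at `(ζ^ℓ + ζ^{-ℓ}, -1)` counts the `k`-subsets fixed by the rotation
`x ↦ x + ℓ`, and `P(0,1)` counts the `k`-subsets fixed by the reflection `x ↦ -x`. -/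
theorem dihedral_sieving_ksubsets (n k : ℕ) (hn : Odd n) (hk : k ≤ n)
    (P : MvPolynomial (Fin 2) ℤ)
    (hP : P * gfibFact k * gfibFact (n - k) = gfibFact n) :
    (∀ ℓ : ℤ,
      aeval ![primRoot n ^ ℓ + primRoot n ^ (-ℓ), (-1 : ℂ)] P
        = (Nat.card {A : Finset (ZMod n) //
            A.card = k ∧ A.image (fun x => x + (ℓ : ZMod n)) = A} : ℂ)) ∧
    aeval ![(0 : ℂ), 1] P
      = (Nat.card {A : Finset (ZMod n) //
          A.card = k ∧ A.image (fun x => -x) = A} : ℂ) := by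
  have : NeZero n := ⟨hn.pos.ne'⟩
  constructor
  · intro l
    obtain ⟨m, hm, hcount⟩ := rot_count n k (l : ZMod n)
    rw [hcount]
    have hq := prim_order n l
    have hd : Odd (addOrderOf (l : ZMod n)) := hn.of_dvd_nat ⟨m, hm⟩
    have hq0 : primRoot n ^ l ≠ 0 := hq.ne_zero hd.pos.ne'
    have h := key n k hk P hP (primRoot n ^ l) (primRoot n ^ l)⁻¹
    rw [mul_inv_cancel₀ hq0, one_pow, one_mul] at h
    rw [zpow_neg, ← h]
    have hw := wProd_rot _ m hd _ hq
    rw [← hm] at hw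
    rw [hw]
  · obtain ⟨m, rfl⟩ := hn
    have h := key _ k hk P hP 1 (-1)
    rw [wProd_refl, sign_coeff] at h
    rw [refl_count]
    have h0 : ((1:ℂ) * -1) ^ (k.choose 2) = (-1) ^ (k.choose 2) := by simp
    rw [h0] at h
    have h2 := mul_left_cancel₀ (pow_ne_zero _ (by norm_num)) h
    rw [h2]
    congr 2
    simp
end

section
/- (Dihedral sieving for k-multisubsets.) Let n be odd, k ≥ 0, let P ∈ ℤ[s,t] be the unique polynomial with P·{k}!_{s,t}·{n−1}!_{s,t} = {n+k−1}!_{s,t}, and let ζ = exp(2πi/n) ∈ ℂ. Then for every integer ℓ, P(ζ^ℓ + ζ^{−ℓ}, −1) equals the number of multisets M of elements of ℤ/nℤ of cardinality k (counted with multiplicity) such that the multiset image of M under x ↦ x+ℓ equals M; and P(0, 1) equals the number of such multisets M whose multiset image under x ↦ −x equals M. -/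
open MvPolynomial

lemma gfib_fib (m : ℕ) : aeval ![(1:ℤ), 1] (gfib m) = (Nat.fib m : ℤ) := by
  induction m using Nat.twoStepInduction with
  | zero => simp [gfib]
  | one => simp [gfib]
  | more m h1 h2 =>
    rw [gfib, map_add, map_mul, map_mul, h1, h2, Nat.fib_add_two]
    simp [add_comm]

lemma gfib_ne (m : ℕ) (hm : 0 < m) : gfib m ≠ 0 := by
  intro h
  have := gfib_fib m
  rw [h] at this
  have h2 := Nat.fib_pos.2 hm
  simp at this
  omega

lemma gfib_add (a b : ℕ) : gfib (a + b + 1) = gfib (a + 1) * gfib (b + 1) + X 1 * gfib a * gfib b := by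
  induction b using Nat.twoStepInduction with
  | zero => simp [gfib]
  | one => simp [gfib]; ring
  | more b h1 h2 =>
    have e : gfib (a + (b + 2) + 1) = X 0 * gfib (a + (b+1) + 1) + X 1 * gfib (a + b + 1) := by
      rw [show a + (b+2) + 1 = (a + b + 1) + 2 by ring, gfib]; rfl
    have e1 : gfib (b + 2 + 1) = X 0 * gfib (b + 2) + X 1 * gfib (b + 1) := by
      rw [show b + 2 + 1 = (b + 1) + 2 by ring, gfib]
    have e2 : gfib (b + 2) = X 0 * gfib (b + 1) + X 1 * gfib b := by rw [gfib]
    rw [e, h1, h2, e1, e2]; ring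

noncomputable def QQ (m : ℕ) : ℕ → MvPolynomial (Fin 2) ℤ
  | 0 => 1
  | (N + 1) => if m ∣ N + 1 then QQ m N else gfib (N + 1) * QQ m N

noncomputable def WW (V : ℕ → MvPolynomial (Fin 2) ℤ) : ℕ → MvPolynomial (Fin 2) ℤ
  | 0 => 1
  | (N + 1) => V (N + 1) * WW V N

lemma fact_split (m : ℕ) (V : ℕ → MvPolynomial (Fin 2) ℤ)
    (hV : ∀ j, gfib (m * j) = gfib m * V j) (N : ℕ) :
    gfibFact N = gfib m ^ (N / m) * WW V (N / m) * QQ m N := by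
  induction N with
  | zero => simp [gfibFact, WW, QQ]
  | succ N ih =>
    rw [gfibFact, ih, QQ, Nat.succ_div]
    split_ifs with h
    · have e : N + 1 = m * (N / m + 1) := by
        have := Nat.mul_div_cancel' h
        rw [Nat.succ_div, if_pos h] at this
        exact this.symm
      have e2 : gfib (N + 1) = gfib m * V (N / m + 1) := by
        rw [← hV]; exact congrArg gfib e
      rw [e2, WW, pow_succ]; ring
    · rw [add_zero]; ring

lemma phi_WW (φ : MvPolynomial (Fin 2) ℤ →+* ℂ) (V : ℕ → MvPolynomial (Fin 2) ℤ)
    (hV : ∀ j, φ (V j) = j) (j : ℕ) : φ (WW V j) = (Nat.factorial j : ℂ) := by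
  induction j with
  | zero => simp [WW]
  | succ j ih => rw [WW, map_mul, hV, ih, Nat.factorial_succ]; push_cast; ring

lemma phi_QQ_ne (φ : MvPolynomial (Fin 2) ℤ →+* ℂ) (m : ℕ)
    (hne : ∀ i, ¬ m ∣ i → φ (gfib i) ≠ 0) (j : ℕ) : φ (QQ m j) ≠ 0 := by
  induction j with
  | zero => simp [QQ]
  | succ j ih =>
    rw [QQ]
    split_ifs with h
    · exact ih
    · rw [map_mul]; exact mul_ne_zero (hne _ h) ih

lemma phi_QQ_add (φ : MvPolynomial (Fin 2) ℤ →+* ℂ) (m : ℕ)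
    (hper : ∀ i, ¬ m ∣ i → φ (gfib (i + m)) = φ (gfib i)) (x y : ℕ) (hx : m ∣ x) :
    φ (QQ m (x + y)) = φ (QQ m x) * φ (QQ m y) := by
  have hper' : ∀ c i, ¬ m ∣ i → φ (gfib (i + m * c)) = φ (gfib i) := by
    intro c i hi
    induction c with
    | zero => simp
    | succ c ih =>
      rw [mul_add, mul_one, ← add_assoc, hper, ih]
      rwa [Nat.dvd_add_left (dvd_mul_right m c)]
  induction y with
  | zero => simp [QQ]
  | succ y ih =>
    rw [← add_assoc, QQ, QQ]
    have : m ∣ x + y + 1 ↔ m ∣ y + 1 := by rw [add_assoc, Nat.dvd_add_right hx]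
    simp only [this]
    split_ifs with h
    · exact ih
    · obtain ⟨c, rfl⟩ := hx
      rw [map_mul, map_mul, ih, show m * c + y + 1 = y + 1 + m * c by ring, hper' c _ h]
      ring

lemma alg_main (φ : MvPolynomial (Fin 2) ℤ →+* ℂ) (m : ℕ) (hm : 0 < m)
    (V : ℕ → MvPolynomial (Fin 2) ℤ)
    (hV : ∀ j, gfib (m * j) = gfib m * V j) (hφV : ∀ j, φ (V j) = j)
    (hper : ∀ i, ¬ m ∣ i → φ (gfib (i + m)) = φ (gfib i))
    (hne : ∀ i, ¬ m ∣ i → φ (gfib i) ≠ 0)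
    (x k : ℕ) (P : MvPolynomial (Fin 2) ℤ)
    (hP : P * gfibFact k * gfibFact x = gfibFact (x + k)) :
    ((m ∣ x ∨ m ∣ k) → φ P = (Nat.choose (x / m + k / m) (k / m) : ℂ)) ∧
    (¬ m ∣ k → m ∣ x + 1 → φ (gfib m) = 0 → φ P = 0) := by
  rw [fact_split m V hV, fact_split m V hV, fact_split m V hV] at hP
  have hg := gfib_ne m hm
  constructor
  · intro hd
    have e : (x + k) / m = x / m + k / m := by
      rcases hd with hd | hd
      · exact Nat.add_div_of_dvd_right hd
      · exact Nat.add_div_of_dvd_left hd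
    have eQ : φ (QQ m (x + k)) = φ (QQ m x) * φ (QQ m k) := by
      rcases hd with hd | hd
      · exact phi_QQ_add φ m hper x k hd
      · rw [add_comm, phi_QQ_add φ m hper k x hd, mul_comm]
    rw [e] at hP
    have h1 : P * WW V (k / m) * WW V (x / m) * QQ m k * QQ m x
        = WW V (x / m + k / m) * QQ m (x + k) := by
      apply mul_left_cancel₀ (pow_ne_zero (x / m + k / m) hg)
      rw [← mul_assoc (gfib m ^ (x / m + k / m)) (WW V _) (QQ m _), ← hP, pow_add]; ring
    have h2 := congrArg φ h1
    simp only [map_mul, phi_WW φ V hφV, eQ] at h2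
    have n1 := phi_QQ_ne φ m hne x
    have n2 := phi_QQ_ne φ m hne k
    have h3 := Nat.add_choose_mul_factorial_mul_factorial (x / m) (k / m)
    have h4 : ((Nat.choose (x / m + k / m) (k / m) : ℂ)) * (x / m).factorial * (k / m).factorial = ((x / m + k / m).factorial : ℂ) := by exact_mod_cast h3
    rw [← h4] at h2
    have f1 : ((x / m).factorial : ℂ) ≠ 0 := by exact_mod_cast Nat.factorial_ne_zero _
    have f2 : ((k / m).factorial : ℂ) ≠ 0 := by exact_mod_cast Nat.factorial_ne_zero _
    apply mul_right_cancel₀ (mul_ne_zero (mul_ne_zero f1 f2) (mul_ne_zero n1 n2))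
    linear_combination h2
  · intro hk hx h0
    have e : (x + k) / m = x / m + k / m + 1 := by
      obtain ⟨c, hc⟩ := hx
      have hk' : k % m ≠ 0 := fun h => hk (Nat.dvd_of_mod_eq_zero h)
      have hx' : x % m = m - 1 := by
        rcases c with _ | c
        · simp at hc
        · rw [show x = (m - 1) + m * c by rw [mul_add] at hc; omega, Nat.add_mul_mod_self_left, Nat.mod_eq_of_lt (by omega)]
      rw [Nat.add_div hm, if_pos (by omega)]
    rw [e] at hP
    have h1 : P * WW V (k / m) * WW V (x / m) * QQ m k * QQ m x
        = gfib m * WW V (x / m + k / m + 1) * QQ m (x + k) := by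
      apply mul_left_cancel₀ (pow_ne_zero (x / m + k / m) hg)
      rw [pow_succ] at hP
      rw [pow_add] at hP ⊢
      linear_combination hP
    have h2 := congrArg φ h1
    simp only [map_mul, phi_WW φ V hφV, h0, zero_mul] at h2
    have n1 := phi_QQ_ne φ m hne x
    have n2 := phi_QQ_ne φ m hne k
    have f1 : ((x / m).factorial : ℂ) ≠ 0 := by exact_mod_cast Nat.factorial_ne_zero _
    have f2 : ((k / m).factorial : ℂ) ≠ 0 := by exact_mod_cast Nat.factorial_ne_zero _
    simpa [n1, n2, f1, f2, Nat.factorial_ne_zero] using h2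

noncomputable def VV (m : ℕ) : ℕ → MvPolynomial (Fin 2) ℤ
  | 0 => 0
  | (j + 1) => gfib (m * j + 1) + X 1 * VV m j * gfib (m - 1)

lemma VV_spec (m : ℕ) (hm : 0 < m) (j : ℕ) : gfib (m * j) = gfib m * VV m j := by
  induction j with
  | zero => simp [gfib, VV]
  | succ j ih =>
    obtain ⟨a, rfl⟩ := Nat.exists_eq_succ_of_ne_zero hm.ne'
    rw [mul_add, mul_one, VV, Nat.succ_eq_add_one, ← add_assoc, gfib_add, ih]
    simp only [Nat.add_sub_cancel]
    ring

lemma phi_VV (φ : MvPolynomial (Fin 2) ℤ →+* ℂ) (m : ℕ) (hm : 1 < m)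
    (hper : ∀ i, φ (gfib (i + m)) = φ (gfib i)) (j : ℕ) : φ (VV m j) = j := by
  have h0 : φ (gfib m) = 0 := by simpa [gfib] using hper 0
  have h1 : ∀ j, φ (gfib (m * j + 1)) = 1 := by
    intro j
    induction j with
    | zero => simp [gfib]
    | succ j ih => rw [mul_add, mul_one, show m * j + m + 1 = m * j + 1 + m by ring, hper, ih]
  have h2 : φ (X 1) * φ (gfib (m - 1)) = 1 := by
    have := h1 1
    obtain ⟨a, rfl⟩ := Nat.exists_eq_succ_of_ne_zero (show m ≠ 0 by omega)
    rw [mul_one, Nat.succ_eq_add_one, gfib, map_add, map_mul, h0] at this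
    simpa using this
  induction j with
  | zero => simp [VV]
  | succ j ih =>
    rw [VV, map_add, map_mul, map_mul, ih, h1]
    push_cast
    linear_combination (j:ℂ) * h2

lemma refl_val (r k : ℕ) (P : MvPolynomial (Fin 2) ℤ)
    (hP : P * gfibFact k * gfibFact (2 * r) = gfibFact (2 * r + k)) :
    aeval ![(0 : ℂ), 1] P = (Nat.choose (r + k / 2) (k / 2) : ℂ) := by
  set φ : MvPolynomial (Fin 2) ℤ →+* ℂ := (aeval ![(0 : ℂ), 1]).toRingHom with hφ
  change φ P = _
  have hper : ∀ i, φ (gfib (i + 2)) = φ (gfib i) := by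
    intro i
    rw [gfib]; simp [hφ]
  have hodd : ∀ c, φ (gfib (2 * c + 1)) = 1 := by
    intro c
    induction c with
    | zero => simp [gfib]
    | succ c ih => rw [show 2 * (c + 1) + 1 = 2 * c + 1 + 2 by ring, hper, ih]
  have := (alg_main φ 2 (by norm_num) (VV 2) (VV_spec 2 (by norm_num))
    (phi_VV φ 2 (by norm_num) hper) (fun i _ => hper i) (fun i hi => by
      obtain ⟨c, rfl⟩ : Odd i := by rwa [← Nat.not_even_iff_odd, even_iff_two_dvd]
      rw [hodd]; exact one_ne_zero) (2 * r) k P hP).1 (Or.inl (dvd_mul_right _ _))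
  simpa using this

lemma rot_val (m x k : ℕ) (hm : Odd m) (hx : m ∣ x + 1) (q : ℂ) (hq : ∀ i : ℕ, q ^ i = 1 ↔ m ∣ i)
    (P : MvPolynomial (Fin 2) ℤ)
    (hP : P * gfibFact k * gfibFact x = gfibFact (x + k)) :
    aeval ![q + q⁻¹, (-1 : ℂ)] P =
      if m ∣ k then (Nat.choose (x / m + k / m) (k / m) : ℂ) else 0 := by
  set φ : MvPolynomial (Fin 2) ℤ →+* ℂ := (aeval ![q + q⁻¹, (-1 : ℂ)]).toRingHom with hφ
  change φ P = _
  have hqm : q ^ m = 1 := (hq m).2 dvd_rfl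
  have hq0 : q ≠ 0 := by
    rintro rfl
    rw [zero_pow hm.pos.ne'] at hqm
    exact zero_ne_one hqm
  have hrec : ∀ i, φ (gfib (i + 2)) = (q + q⁻¹) * φ (gfib (i + 1)) - φ (gfib i) := by
    intro i
    rw [gfib]; simp [hφ, sub_eq_add_neg]
  rcases Nat.lt_or_ge 1 m with h1 | h1
  · have hq2 : q ^ 2 ≠ 1 := by
      rw [Ne, hq]; intro h
      have := Nat.le_of_dvd (by norm_num) h
      obtain ⟨c, rfl⟩ := hm
      omega
    have hqq : q - q⁻¹ ≠ 0 := by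
      intro h
      apply hq2
      field_simp at h
      linear_combination h
    have hcl : ∀ i, φ (gfib i) * (q - q⁻¹) = q ^ i - (q⁻¹) ^ i := by
      intro i
      induction i using Nat.twoStepInduction with
      | zero => simp [gfib]
      | one => simp [gfib]
      | more i h1 h2 =>
        have e := mul_inv_cancel₀ hq0
        rw [hrec, sub_mul, mul_assoc, h1, h2]
        simp only [pow_succ]
        linear_combination (q ^ i - (q⁻¹) ^ i) * e
    have hper : ∀ i, φ (gfib (i + m)) = φ (gfib i) := by
      intro i
      apply mul_right_cancel₀ hqq
      rw [hcl, hcl, pow_add, pow_add, inv_pow q m, hqm]; simp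
    have := alg_main φ m hm.pos (VV m) (VV_spec m hm.pos) (phi_VV φ m h1 hper)
      (fun i _ => hper i) (fun i hi h => by
        have := hcl i
        rw [h, zero_mul] at this
        apply hi
        have h2 : q ^ (2 * i) = 1 := by
          have e : q ^ i * (q⁻¹) ^ i = 1 := by rw [← mul_pow, mul_inv_cancel₀ hq0, one_pow]
          rw [two_mul, pow_add]
          linear_combination e - q ^ i * this
        rw [hq] at h2
        exact (Nat.Coprime.dvd_mul_left (by simpa using hm)).1 h2) x k P hP
    split_ifs with hk
    · exact this.1 (Or.inr hk)
    · exact this.2 hk hx (by simpa [gfib] using hper 0)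
  · obtain rfl : m = 1 := le_antisymm h1 hm.pos
    have hq1 : q = 1 := by simpa using hqm
    subst hq1
    have hV : ∀ j, φ (gfib j) = j := by
      intro i
      induction i using Nat.twoStepInduction with
      | zero => simp [gfib]
      | one => simp [gfib]
      | more i h1 h2 => rw [hrec, h1, h2]; push_cast; simp; ring
    rw [if_pos (one_dvd _)]
    exact (alg_main φ 1 one_pos gfib (by simp [gfib]) hV (by simp) (by simp) x k P hP).1 (Or.inr (one_dvd _))

lemma count_eq {Y : Type} [Fintype Y] [DecidableEq Y] (f : Equiv.Perm Y) (k : ℕ) :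
    Nat.card {M : Multiset Y // Multiset.card M = k ∧ M.map f = M}
      = Nat.card {g : Y → ℕ // ∑ x, g x = k ∧ ∀ x, g (f x) = g x} := by
  apply Nat.card_congr
  refine (Multiset.toFinsupp.toEquiv.trans Finsupp.equivFunOnFinite).subtypeEquiv ?_
  intro M
  have e : ∀ x, (Multiset.toFinsupp.toEquiv.trans Finsupp.equivFunOnFinite) M x = M.count x :=
    fun x => rfl
  simp only [e]
  rw [Multiset.sum_count_eq_card (by simp)]
  refine and_congr Iff.rfl ⟨fun h x => ?_, fun h => ?_⟩
  · conv_lhs => rw [← h]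
    exact Multiset.count_map_eq_count' f M f.injective x
  · ext y
    obtain ⟨x, rfl⟩ := f.surjective y
    rw [Multiset.count_map_eq_count' f M f.injective x, h]

lemma card_fun {Y : Type} [Fintype Y] [DecidableEq Y] (a : ℕ) :
    Nat.card {g : Y → ℕ // ∑ x, g x = a} = Nat.multichoose (Fintype.card Y) a := by
  rw [← Nat.card_congr (Sym.equivNatSumOfFintype Y a), Nat.card_eq_fintype_card,
    Sym.card_sym_eq_multichoose]

lemma rot_count_s7 {G : Type} [AddCommGroup G] [Fintype G] [DecidableEq G] (c : G) (k : ℕ) :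
    Nat.card {M : Multiset G // Multiset.card M = k ∧ M.map (fun x => x + c) = M}
      = if addOrderOf c ∣ k then
        Nat.multichoose (Nat.card (G ⧸ AddSubgroup.zmultiples c)) (k / addOrderOf c) else 0 := by
  classical
  have h0 := count_eq (Equiv.addRight c) k
  simp only [Equiv.coe_addRight] at h0
  rw [h0]
  set H := AddSubgroup.zmultiples c with hH
  have hm : 0 < addOrderOf c := addOrderOf_pos c
  have hsum : ∀ h : G ⧸ H → ℕ, ∑ x : G, h (QuotientAddGroup.mk x) = addOrderOf c * ∑ y, h y := by
    intro h
    rw [← Finset.sum_fiberwise (Finset.univ) (fun x : G => (QuotientAddGroup.mk x : G ⧸ H)), Finset.mul_sum]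
    apply Finset.sum_congr rfl
    intro y _
    rw [Finset.sum_congr rfl (g := fun _ => h y) (fun x hx => by rw [(Finset.mem_filter.1 hx).2]),
      Finset.sum_const, smul_eq_mul]
    congr 1
    have := Nat.card_congr (QuotientAddGroup.preimageMkEquivAddSubgroupProdSet H {y})
    rw [Nat.card_prod, Nat.card_zmultiples] at this
    simp only [Nat.card_unique, mul_one] at this
    rw [← this, Nat.card_eq_fintype_card, Fintype.card_subtype]
    congr 1
    ext i
    simp
  have hbij : Nat.card {g : G → ℕ // ∑ x, g x = k ∧ ∀ x, g (x + c) = g x}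
      = Nat.card {h : G ⧸ H → ℕ // addOrderOf c * ∑ y, h y = k} := by
    symm
    refine Nat.card_eq_of_bijective (fun h => ⟨fun x => h.1 (QuotientAddGroup.mk x), ?_, ?_⟩) ⟨?_, ?_⟩
    · rw [hsum]; exact h.2
    · intro x
      refine congrArg h.1 ?_
      rw [QuotientAddGroup.eq]
      rw [show -(x + c) + x = -c by abel]
      exact H.neg_mem (AddSubgroup.mem_zmultiples c)
    · intro h1 h2 h
      ext y
      obtain ⟨x, rfl⟩ := QuotientAddGroup.mk_surjective y
      exact congrFun (congrArg Subtype.val h) x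
    · rintro ⟨g, hg1, hg2⟩
      have hz : ∀ (z : ℤ) x, g (x + z • c) = g x := by
        intro z
        induction z using Int.induction_on with
        | zero => simp
        | succ i ih => intro x; rw [add_zsmul, one_zsmul, ← add_assoc, hg2, ih]
        | pred i ih =>
          intro x
          rw [← ih x, ← hg2 (x + _), sub_zsmul, one_zsmul]
          congr 1; abel
      let h : G ⧸ H → ℕ := fun y => g y.out
      have hh : ∀ x : G, h (QuotientAddGroup.mk x) = g x := by
        intro x
        have : (QuotientAddGroup.mk ((QuotientAddGroup.mk x : G ⧸ H).out) : G ⧸ H) = QuotientAddGroup.mk x := QuotientAddGroup.out_eq' _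
        rw [eq_comm, QuotientAddGroup.eq] at this
        obtain ⟨z, hz'⟩ := AddSubgroup.mem_zmultiples_iff.1 this
        rw [← hz z x, hz']
        simp [h]
      refine ⟨⟨h, ?_⟩, ?_⟩
      · rw [← hsum, ← hg1]; simp only [hh]
      · ext x; exact hh x
  rw [hbij]
  split_ifs with hd
  · rw [Nat.card_eq_fintype_card (α := G ⧸ H), ← card_fun]
    apply Nat.card_congr
    apply Equiv.subtypeEquivRight
    intro h
    obtain ⟨a, rfl⟩ := hd
    rw [Nat.mul_div_cancel_left _ hm]
    exact Nat.mul_right_inj hm.ne'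
  · rw [Nat.card_eq_zero]
    left
    exact ⟨fun h => hd ⟨_, h.2.symm⟩⟩

lemma symm_sum (r : ℕ) (g : ZMod (2 * r + 1) → ℕ) (hg : ∀ x, g (-x) = g x) :
    ∑ x, g x = g 0 + 2 * ∑ i : Fin r, g ((i : ℕ) + 1) := by
  have h1 : ∑ x, g x = ∑ i ∈ Finset.range (2 * r + 1), g (i : ZMod (2 * r + 1)) := by
    rw [← Fin.sum_univ_eq_sum_range (fun i => g (i : ZMod (2 * r + 1)))]
    apply Finset.sum_congr rfl
    intro x _
    congr 1
    exact (ZMod.natCast_zmod_val (n := 2 * r + 1) x).symm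
  have hsp : ∀ f : ℕ → ℕ, ∑ i ∈ Finset.range (2 * r), f i
      = ∑ i ∈ Finset.range r, f i + ∑ i ∈ Finset.range r, f (r + i) := by
    intro f; rw [two_mul r, Finset.sum_range_add]
  rw [h1, Finset.sum_range_succ', hsp,
    Fin.sum_univ_eq_sum_range (fun i => g ((i : ℕ) + 1)) r,
    ← Finset.sum_range_reflect (fun x => g ((r + x + 1 : ℕ) : ZMod _)) r]
  have h2 : ∀ j ∈ Finset.range r, g ((r + (r - 1 - j) + 1 : ℕ) : ZMod (2 * r + 1)) = g ((j : ℕ) + 1) := by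
    intro j hj
    rw [Finset.mem_range] at hj
    rw [← hg]
    congr 1
    have : (((r + (r - 1 - j) + 1) + (j + 1) : ℕ) : ZMod (2 * r + 1)) = 0 := by
      rw [show (r + (r - 1 - j) + 1) + (j + 1) = 2 * r + 1 by omega]
      exact ZMod.natCast_self _
    rw [neg_eq_iff_add_eq_zero, ← this]
    push_cast; rfl
  have h3 := Finset.sum_congr rfl h2
  rw [h3]
  push_cast
  ring

lemma refl_count_s7 (r k : ℕ) :
    Nat.card {M : Multiset (ZMod (2 * r + 1)) // Multiset.card M = k ∧ M.map (fun x => -x) = M}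
      = Nat.choose (r + k / 2) (k / 2) := by
  have h0 := count_eq (Equiv.neg (ZMod (2 * r + 1))) k
  simp only [Equiv.neg_apply] at h0
  have h0' : Nat.card {M : Multiset (ZMod (2 * r + 1)) // Multiset.card M = k ∧ M.map (fun x => -x) = M} = _ := h0
  rw [h0']
  have hle : ∀ x : ZMod (2 * r + 1), x.valMinAbs.natAbs < r + 1 := by
    intro x
    have := ZMod.natAbs_valMinAbs_le x
    omega
  let idx : ZMod (2 * r + 1) → Fin (r + 1) := fun x => ⟨x.valMinAbs.natAbs, hle x⟩
  have hidx : ∀ x, idx (-x) = idx x := by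
    intro x; simp [idx, ZMod.natAbs_valMinAbs_neg]
  have hidxc : ∀ i : Fin (r + 1), idx ((i : ℕ) : ZMod (2 * r + 1)) = i := by
    intro i
    ext
    simp only [idx]
    rw [ZMod.valMinAbs_natCast_of_le_half (by omega)]
    simp
  have hidx2 : ∀ x, (((idx x : ℕ) : ZMod (2 * r + 1)) = x) ∨ (((idx x : ℕ) : ZMod (2 * r + 1)) = -x) := by
    intro x
    simp only [idx]
    have e := ZMod.coe_valMinAbs x
    rcases Int.natAbs_eq x.valMinAbs with h | h
    · left; conv_rhs => rw [← e, h]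
      simp
    · right; conv_rhs => rw [← e, h]
      simp
  have key : Nat.card {F : Fin (r + 1) → ℕ // F 0 + 2 * ∑ i : Fin r, F i.succ = k}
      = Nat.card {g : ZMod (2 * r + 1) → ℕ // ∑ x, g x = k ∧ ∀ x, g (-x) = g x} := by
    have hc0 : idx 0 = 0 := by simpa using hidxc 0
    have hcs : ∀ i : Fin r, idx (((i : ℕ) : ZMod (2 * r + 1)) + 1) = i.succ := by
      intro i; simpa using hidxc i.succ
    refine Nat.card_eq_of_bijective (fun F => ⟨fun x => F.1 (idx x), ?_, ?_⟩) ⟨?_, ?_⟩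
    · rw [symm_sum r _ (fun x => by rw [hidx])]
      simp only [hc0, hcs]
      exact F.2
    · intro x; exact congrArg F.1 (hidx x)
    · intro F1 F2 h
      ext i
      have := congrFun (congrArg Subtype.val h) (i : ℕ)
      simpa [hidxc] using this
    · rintro ⟨g, hg1, hg2⟩
      refine ⟨⟨fun i => g ((i : ℕ) : ZMod (2 * r + 1)), ?_⟩, ?_⟩
      · rw [← hg1, symm_sum r g hg2]; simp
      · ext x
        simp only
        rcases hidx2 x with h | h
        · rw [h]
        · rw [h, hg2]
  rw [← key]
  have key2 : Nat.card {h : Fin (r + 1) → ℕ // ∑ x, h x = k / 2} =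
      Nat.card {F : Fin (r + 1) → ℕ // F 0 + 2 * ∑ i : Fin r, F i.succ = k} := by
    refine Nat.card_eq_of_bijective
      (fun h => ⟨Fin.cons (2 * h.1 0 + k % 2) (fun i => h.1 i.succ), ?_⟩) ⟨?_, ?_⟩
    · have := h.2
      rw [Fin.sum_univ_succ] at this
      simp only [Fin.cons_zero, Fin.cons_succ]
      omega
    · intro h1 h2 h
      have h' := congrArg Subtype.val h
      ext i
      refine Fin.cases ?_ (fun j => ?_) i
      · have := congrFun h' 0
        simp only [Fin.cons_zero] at this
        omega
      · have := congrFun h' j.succ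
        simpa only [Fin.cons_succ] using this
    · rintro ⟨F, hF⟩
      refine ⟨⟨Fin.cons (F 0 / 2) (fun i => F i.succ), ?_⟩, ?_⟩
      · rw [Fin.sum_univ_succ]
        simp only [Fin.cons_zero, Fin.cons_succ]
        omega
      · ext i
        refine Fin.cases ?_ (fun j => ?_) i
        · simp only [Fin.cons_zero]
          omega
        · simp only [Fin.cons_succ]
  rw [← key2, card_fun, Fintype.card_fin, Nat.multichoose_eq]
  congr 1
  omega

theorem dihedral_sieving_kmultisubsets (n k : ℕ) (hn : Odd n)
    (P : MvPolynomial (Fin 2) ℤ)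
    (hP : P * gfibFact k * gfibFact (n - 1) = gfibFact (n + k - 1)) :
    (∀ ℓ : ℤ,
      aeval ![primRoot n ^ ℓ + primRoot n ^ (-ℓ), (-1 : ℂ)] P
        = (Nat.card {M : Multiset (ZMod n) //
            Multiset.card M = k ∧ M.map (fun x => x + (ℓ : ZMod n)) = M} : ℂ)) ∧
    aeval ![(0 : ℂ), 1] P
      = (Nat.card {M : Multiset (ZMod n) //
          Multiset.card M = k ∧ M.map (fun x => -x) = M} : ℂ) := by
  obtain ⟨r, rfl⟩ := hn
  have e1 : 2 * r + 1 - 1 = 2 * r := by omega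
  have e2 : 2 * r + 1 + k - 1 = 2 * r + k := by omega
  rw [e1, e2] at hP
  refine ⟨fun ℓ => ?_, ?_⟩
  · have hz : IsPrimitiveRoot (primRoot (2 * r + 1)) (2 * r + 1) :=
      Complex.isPrimitiveRoot_exp _ (by omega)
    have hcard := AddSubgroup.card_eq_card_quotient_mul_card_addSubgroup
      (AddSubgroup.zmultiples (ℓ : ZMod (2 * r + 1)))
    rw [Nat.card_zmultiples, Nat.card_zmod] at hcard
    rw [rot_count_s7]
    set m := addOrderOf (ℓ : ZMod (2 * r + 1)) with hm
    set d := Nat.card (ZMod (2 * r + 1) ⧸ AddSubgroup.zmultiples (ℓ : ZMod (2 * r + 1))) with hd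
    have hmo : Odd m := by
      have h : Odd (d * m) := by rw [← hcard]; exact ⟨r, rfl⟩
      exact (Nat.odd_mul.1 h).2
    have hq : ∀ i : ℕ, (primRoot (2 * r + 1) ^ ℓ) ^ i = 1 ↔ m ∣ i := by
      intro i
      rw [← zpow_natCast, ← zpow_mul, hz.zpow_eq_one_iff_dvd, hm, addOrderOf_dvd_iff_nsmul_eq_zero,
        ← ZMod.intCast_zmod_eq_zero_iff_dvd]
      push_cast
      rw [nsmul_eq_mul, mul_comm (ℓ : ZMod (2 * r + 1))]
    rw [zpow_neg, rot_val m (2 * r) k hmo ⟨d, by rw [hcard, mul_comm]⟩ _ hq P hP]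
    clear_value d m
    split_ifs with hk
    · have hd0 : 0 < d := by
        rcases Nat.eq_zero_or_pos d with h | h
        · rw [h] at hcard; omega
        · exact h
      have hx : 2 * r / m = d - 1 := by
        obtain ⟨d', rfl⟩ : ∃ d', d = d' + 1 := ⟨d - 1, by omega⟩
        have := hmo.pos
        rw [show 2 * r = (m - 1) + m * d' by rw [add_mul, mul_comm d' m] at hcard; omega,
          Nat.add_mul_div_left _ _ this, Nat.div_eq_of_lt (by omega)]
        simp
      rw [Nat.multichoose_eq, hx, Nat.sub_add_comm hd0]
    · simp
  · rw [refl_val r k P hP, refl_count_s7]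
end
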